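/- arXiv:1705.02595 — 2 statements merged into one kernel-verified Lean document; each statement's English description precedes it below -/
import Mathlib

section
/- Let d ≥ 2 and let D ⊂ ℝ^d be a nonempty bounded open set. Let Φ : (0,∞) → (0,∞) be an increasing homeomorphism of (0,∞) onto itself satisfying the global weak scaling condition with exponents 2δ₁, 2δ₂ (0 < δ₁ ≤ δ₂ < 1), and let ψ : (0,∞) → (0,∞) be nondecreasing and satisfy the global weak scaling condition with exponents γ₁, γ₂ where 1/2 < γ₁ ≤ γ₂ < 1. Define g(r) := 1/(r^d·ψ(Φ(r)⁻¹)) and, for x, y ∈ D with x ≠ y, G̃(x,y) := min(Φ(δ_D(x))^{1/2}/Φ(|x−y|)^{1/2}, 1) · min(Φ(δ_D(y))^{1/2}/Φ(|x−y|)^{1/2}, 1) · g(|x−y|). Then there exists C ≥ 1 such that for every x ∈ D, C⁻¹·Φ(δ_D(x))^{1/2} ≤ ∫_D G̃(x,y) dy ≤ C·Φ(δ_D(x))^{1/2}. -/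
open MeasureTheory

/-!
Lower weak scaling is stable under composition, so `r ↦ 1 / (√(Φ r) * ψ (Φ r)⁻¹)` inherits the
exponent `ε = 2δ₁(γ₁ - 1/2)`, which is positive exactly because `γ₁ > 1/2`.

*Upper bound.* Estimating the first boundary factor by `√Φ(δ(x)) / √Φ(|x - y|)` and the second by
`1` bounds the kernel by a multiple of `√Φ(δ(x)) |x - y|^(ε - d)`, and this singularity is
integrable over bounded sets, uniformly in the pole `x`.

*Lower bound.* Fix a ball in `D` away from the boundary and remove from it the concentric half-size
ball moved to `x`. The volume left does not depend on `x`, and for `y` in that region all the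
factors other than `√Φ(δ(x))` are bounded below by constants.
-/

section

open Metric Set Bornology Module

/-- `f` is positive on `(0, ∞)` and satisfies the lower half of the global weak scaling condition,
with exponent `α` and constant `c`. -/
structure LowerWeakScaling (f : ℝ → ℝ) (c α : ℝ) : Prop where
  const_pos : 0 < c
  pos : ∀ ⦃r : ℝ⦄, 0 < r → 0 < f r
  le_div : ∀ ⦃r R : ℝ⦄, 0 < r → r ≤ R → c * (R / r) ^ α ≤ f R / f r

namespace LowerWeakScaling

variable {f g : ℝ → ℝ} {a b α β : ℝ}

lemma div_rpow (hf : LowerWeakScaling f a α) (β : ℝ) :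
    LowerWeakScaling (fun r => f r / r ^ β) a (α - β) where
  const_pos := hf.const_pos
  pos _ hr := div_pos (hf.pos hr) (Real.rpow_pos_of_pos hr β)
  le_div r R hr hrR := by
    have hR : 0 < R := hr.trans_le hrR
    calc a * (R / r) ^ (α - β) = a * (R / r) ^ α / (R / r) ^ β := by
          rw [Real.rpow_sub (by positivity), mul_div_assoc]
      _ ≤ f R / f r / (R / r) ^ β := by
          gcongr
          exact hf.le_div hr hrR
      _ = f R / R ^ β / (f r / r ^ β) := by
          rw [Real.div_rpow hR.le hr.le, div_div_div_comm]

lemma inv_comp_inv (hf : LowerWeakScaling f a α) :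
    LowerWeakScaling (fun r => (f r⁻¹)⁻¹) a α where
  const_pos := hf.const_pos
  pos _ hr := inv_pos.2 (hf.pos (inv_pos.2 hr))
  le_div r R hr hrR := by
    simpa only [inv_div_inv] using hf.le_div (inv_pos.2 (hr.trans_le hrR)) (inv_anti₀ hr hrR)

lemma comp (hg : LowerWeakScaling g b β) (hβ : 0 ≤ β) (hf : LowerWeakScaling f a α)
    (hfmono : MonotoneOn f (Ioi 0)) :
    LowerWeakScaling (fun r => g (f r)) (b * a ^ β) (α * β) where
  const_pos := mul_pos hg.const_pos (Real.rpow_pos_of_pos hf.const_pos β)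
  pos _ hr := hg.pos (hf.pos hr)
  le_div r R hr hrR := by
    have hR : 0 < R := hr.trans_le hrR
    have ha := hf.const_pos
    have hb := hg.const_pos
    calc b * a ^ β * (R / r) ^ (α * β) = b * (a * (R / r) ^ α) ^ β := by
          rw [Real.mul_rpow ha.le (by positivity), Real.rpow_mul (by positivity), mul_assoc]
      _ ≤ b * (f R / f r) ^ β := by
          gcongr
          exact hf.le_div hr hrR
      _ ≤ g (f R) / g (f r) := hg.le_div (hf.pos hr) (hfmono hr hR hrR)

lemma exists_le_mul_rpow (hf : LowerWeakScaling f a α) {M : ℝ} (hM : 0 < M) :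
    ∃ K, 0 < K ∧ ∀ r ∈ Ioc 0 M, f r ≤ K * r ^ α := by
  have ha := hf.const_pos
  have hfM := hf.pos hM
  refine ⟨f M / (a * M ^ α), by positivity, fun r ⟨hr, hrM⟩ => ?_⟩
  have hscale : a * (M / r) ^ α * f r ≤ f M := (le_div_iff₀ (hf.pos hr)).1 (hf.le_div hr hrM)
  calc f r = a * (M / r) ^ α * f r / (a * (M / r) ^ α) := by field_simp
    _ ≤ f M / (a * (M / r) ^ α) := by gcongr
    _ = f M / (a * M ^ α) * r ^ α := by rw [Real.div_rpow hM.le hr.le]; field_simp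

end LowerWeakScaling

section Kernel

/-- The paper's `g(r) = 1 / (r^d ψ(Φ(r)⁻¹))`, the radial profile of the Green function on the whole
space. -/
noncomputable def radialGreen (d : ℕ) (Φ ψ : ℝ → ℝ) (r : ℝ) : ℝ :=
  1 / (r ^ d * ψ (Φ r)⁻¹)

/-- The paper's kernel `G̃(x, y)`, comparable to the Green function of the subordinate killed
process in `D`: `g(|x - y|)` damped by one boundary factor for each of the two points. -/
noncomputable def killedGreen {X : Type*} [PseudoMetricSpace X] (d : ℕ) (Φ ψ : ℝ → ℝ) (D : Set X)
    (x y : X) : ℝ :=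
  min (√(Φ (infDist x Dᶜ)) / √(Φ (dist x y))) 1 * min (√(Φ (infDist y Dᶜ)) / √(Φ (dist x y))) 1 *
    radialGreen d Φ ψ (dist x y)

variable {d : ℕ} {Φ ψ : ℝ → ℝ}

lemma exists_radialGreen_div_sqrt_le {a b α γ M : ℝ} (hΦ : LowerWeakScaling Φ a α)
    (hΦmono : MonotoneOn Φ (Ioi 0)) (hψ : LowerWeakScaling ψ b γ) (hγ : 1 / 2 ≤ γ) (hM : 0 < M) :
    ∃ K, 0 < K ∧
      ∀ r ∈ Ioc 0 M, radialGreen d Φ ψ r / √(Φ r) ≤ K * r ^ (α * (γ - 1 / 2) - d) := by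
  obtain ⟨K, hK, hle⟩ := ((hψ.div_rpow (1 / 2)).inv_comp_inv.comp (sub_nonneg.2 hγ) hΦ
    hΦmono).exists_le_mul_rpow hM
  refine ⟨K, hK, fun r hr => ?_⟩
  have hr0 : 0 < r := hr.1
  calc radialGreen d Φ ψ r / √(Φ r)
      = (ψ (Φ r)⁻¹ / (Φ r)⁻¹ ^ (1 / 2 : ℝ))⁻¹ / r ^ d := by
        rw [← Real.sqrt_eq_rpow, Real.sqrt_inv, radialGreen]
        simp only [div_eq_mul_inv, mul_inv, inv_inv]
        ring
    _ ≤ K * r ^ (α * (γ - 1 / 2)) / r ^ d := by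
        gcongr
        exact hle r hr
    _ = K * r ^ (α * (γ - 1 / 2) - d) := by
        rw [Real.rpow_sub hr0, Real.rpow_natCast, mul_div_assoc]

lemma radialGreen_nonneg (hψpos : ∀ ⦃r⦄, 0 < r → 0 < ψ r) {r : ℝ} (hr : 0 ≤ r) (hΦr : 0 < Φ r) :
    0 ≤ radialGreen d Φ ψ r := by
  have := hψpos (inv_pos.2 hΦr)
  unfold radialGreen
  positivity

lemma le_radialGreen (hΦpos : ∀ ⦃r⦄, 0 < r → 0 < Φ r) (hΦmono : MonotoneOn Φ (Ioi 0))
    (hψpos : ∀ ⦃r⦄, 0 < r → 0 < ψ r) (hψmono : MonotoneOn ψ (Ioi 0)) {s r M : ℝ} (hs : 0 < s)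
    (hsr : s ≤ r) (hrM : r ≤ M) : 1 / (M ^ d * ψ (Φ s)⁻¹) ≤ radialGreen d Φ ψ r := by
  have hr : 0 < r := hs.trans_le hsr
  have hΦs := inv_pos.2 (hΦpos hs)
  have hΦr := inv_pos.2 (hΦpos hr)
  have hM : 0 ≤ M := hr.le.trans hrM
  have := hψpos hΦr
  unfold radialGreen
  gcongr
  exact hψmono hΦr hΦs (inv_anti₀ (hΦpos hs) (hΦmono hs hr hsr))

lemma div_le_min_div_one {t v T : ℝ} (ht : 0 ≤ t) (hv : 0 < v) (htT : t ≤ T) (hvT : v ≤ T) :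
    t / T ≤ min (t / v) 1 :=
  le_min (by gcongr) (div_le_one_of_le₀ htT (hv.le.trans hvT))

section PseudoMetricSpace

variable {X : Type*} [PseudoMetricSpace X] {D : Set X} {x y : X}

lemma killedGreen_nonneg (hg : 0 ≤ radialGreen d Φ ψ (dist x y)) : 0 ≤ killedGreen d Φ ψ D x y := by
  unfold killedGreen
  positivity

lemma killedGreen_le (hg : 0 ≤ radialGreen d Φ ψ (dist x y)) :
    killedGreen d Φ ψ D x y ≤
      √(Φ (infDist x Dᶜ)) * (radialGreen d Φ ψ (dist x y) / √(Φ (dist x y))) := by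
  calc killedGreen d Φ ψ D x y
      ≤ √(Φ (infDist x Dᶜ)) / √(Φ (dist x y)) * 1 * radialGreen d Φ ψ (dist x y) := by
        unfold killedGreen
        gcongr
        · exact min_le_left _ _
        · exact min_le_right _ _
    _ = √(Φ (infDist x Dᶜ)) * (radialGreen d Φ ψ (dist x y) / √(Φ (dist x y))) := by ring

lemma le_killedGreen (hΦpos : ∀ ⦃r⦄, 0 < r → 0 < Φ r) (hΦmono : MonotoneOn Φ (Ioi 0))
    (hψpos : ∀ ⦃r⦄, 0 < r → 0 < ψ r) (hψmono : MonotoneOn ψ (Ioi 0)) {s t M : ℝ} (hs : 0 < s)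
    (ht : 0 < t) (hx : infDist x Dᶜ ∈ Ioc 0 M) (hy : infDist y Dᶜ ∈ Icc t M)
    (hxy : dist x y ∈ Icc s M) :
    √(Φ (infDist x Dᶜ)) / √(Φ M) * (√(Φ t) / √(Φ M)) * (1 / (M ^ d * ψ (Φ s)⁻¹)) ≤
      killedGreen d Φ ψ D x y := by
  have hM : 0 < M := hx.1.trans_le hx.2
  have hsqrt_mono {p q : ℝ} (hp : 0 < p) (hpq : p ≤ q) : √(Φ p) ≤ √(Φ q) :=
    Real.sqrt_le_sqrt (hΦmono hp (hp.trans_le hpq) hpq)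
  have hr : 0 < dist x y := hs.trans_le hxy.1
  have hsqrt_dist : 0 < √(Φ (dist x y)) := Real.sqrt_pos.2 (hΦpos hr)
  have hsqrt_dist_le : √(Φ (dist x y)) ≤ √(Φ M) := hsqrt_mono hr hxy.2
  have hfactor_x : √(Φ (infDist x Dᶜ)) / √(Φ M) ≤ min (√(Φ (infDist x Dᶜ)) / √(Φ (dist x y))) 1 :=
    div_le_min_div_one (Real.sqrt_nonneg _) hsqrt_dist (hsqrt_mono hx.1 hx.2) hsqrt_dist_le
  have hfactor_y : √(Φ t) / √(Φ M) ≤ min (√(Φ (infDist y Dᶜ)) / √(Φ (dist x y))) 1 :=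
    calc √(Φ t) / √(Φ M) ≤ √(Φ (infDist y Dᶜ)) / √(Φ M) :=
          div_le_div_of_nonneg_right (hsqrt_mono ht hy.1) (Real.sqrt_nonneg _)
      _ ≤ min (√(Φ (infDist y Dᶜ)) / √(Φ (dist x y))) 1 :=
          div_le_min_div_one (Real.sqrt_nonneg _) hsqrt_dist
            (hsqrt_mono (ht.trans_le hy.1) hy.2) hsqrt_dist_le
  have hψs := hψpos (inv_pos.2 (hΦpos hs))
  unfold killedGreen
  gcongr
  exact le_radialGreen hΦpos hΦmono hψpos hψmono hs hxy.1 hxy.2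

end PseudoMetricSpace

lemma aemeasurable_comp_of_monotoneOn {Ω β γ : Type*} [MeasurableSpace Ω] {μ : Measure Ω}
    [LinearOrder β] [TopologicalSpace β] [OrderClosedTopology β] [MeasurableSpace β] [BorelSpace β]
    [LinearOrder γ] [TopologicalSpace γ] [OrderTopology γ] [SecondCountableTopology γ]
    [MeasurableSpace γ] [BorelSpace γ] {s : Set β} {f : β → γ} {u : Ω → β} (hs : MeasurableSet s)
    (hf : MonotoneOn f s) (hu : AEMeasurable u μ) (hus : ∀ᵐ ω ∂μ, u ω ∈ s) :
    AEMeasurable (fun ω => f (u ω)) μ := by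
  have hmap : (μ.map u).restrict s = μ.map u :=
    Measure.restrict_eq_self_of_ae_mem ((ae_map_iff hu hs).2 hus)
  exact (hmap ▸ aemeasurable_restrict_of_monotoneOn hs hf).comp_aemeasurable' hu

lemma aemeasurable_killedGreen {X : Type*} [MetricSpace X] [MeasurableSpace X] [BorelSpace X]
    {μ : Measure X} [NullSingletonClass μ] {D : Set X} (hΦpos : ∀ ⦃r⦄, 0 < r → 0 < Φ r)
    (hΦmono : MonotoneOn Φ (Ioi 0)) (hψmono : MonotoneOn ψ (Ioi 0)) (hD : MeasurableSet D)
    (hδ : ∀ y ∈ D, 0 < infDist y Dᶜ) (x : X) :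
    AEMeasurable (killedGreen d Φ ψ D x) (μ.restrict D) := by
  have hdist_pos : ∀ᵐ y ∂μ.restrict D, 0 < dist x y := by
    filter_upwards [Measure.ae_ne (μ.restrict D) x] with y hyx using dist_pos.2 hyx.symm
  have hdist : AEMeasurable (fun y => dist x y) (μ.restrict D) := by fun_prop
  have hΦdist := aemeasurable_comp_of_monotoneOn measurableSet_Ioi hΦmono hdist hdist_pos
  have hΦδ := aemeasurable_comp_of_monotoneOn measurableSet_Ioi hΦmono
    measurable_infDist.aemeasurable (ae_restrict_of_forall_mem (μ := μ) hD hδ)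
  have hψdist := aemeasurable_comp_of_monotoneOn measurableSet_Ioi hψmono hΦdist.inv
    (hdist_pos.mono fun y hy => inv_pos.2 (hΦpos hy))
  exact (((aemeasurable_const.div hΦdist.sqrt).min aemeasurable_const).mul
    ((hΦδ.sqrt.div hΦdist.sqrt).min aemeasurable_const)).mul
      (aemeasurable_const.div ((hdist.pow_const d).mul hψdist))

end Kernel

lemma half_infDist_le_infDist {X : Type*} [PseudoMetricSpace X] {s : Set X} {x y : X}
    (hy : y ∈ closedBall x (infDist x s / 2)) : infDist x s / 2 ≤ infDist y s := by
  have htriangle : infDist x s ≤ infDist y s + dist x y := infDist_le_infDist_add_dist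
  linarith [mem_closedBall'.1 hy]

lemma setIntegral_closedBall_dist_rpow {E : Type*} [SeminormedAddCommGroup E] [MeasurableSpace E]
    [BorelSpace E] (μ : Measure E) [μ.IsAddRightInvariant] (x : E) (β R : ℝ) :
    ∫ y in closedBall x R, dist x y ^ β ∂μ = ∫ y in closedBall 0 R, ‖y‖ ^ β ∂μ := by
  have hshift := (measurePreserving_sub_right μ x).setIntegral_preimage_emb
    (MeasurableEquiv.subRight x).measurableEmbedding (fun y => ‖y‖ ^ β) (closedBall 0 R)
  convert hshift using 3
  · ext y
    simp [dist_eq_norm]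
  · simp [dist_eq_norm_sub']

lemma sub_mul_measureReal_ball_le_measureReal_closedBall_sdiff {E : Type*}
    [NormedAddCommGroup E] [NormedSpace ℝ E] [FiniteDimensional ℝ E] [MeasurableSpace E]
    [BorelSpace E] (μ : Measure E) [μ.IsAddHaarMeasure] (x y : E) {r s : ℝ} (hr : 0 ≤ r)
    (hs : 0 ≤ s) :
    (r ^ finrank ℝ E - s ^ finrank ℝ E) * μ.real (ball 0 1) ≤
      μ.real (closedBall x r \ closedBall y s) := by
  rw [sub_mul, ← Measure.addHaar_real_closedBall μ x hr, ← Measure.addHaar_real_closedBall μ y hs]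
  exact le_measureReal_sdiff measure_closedBall_lt_top.ne

section Haar

variable {E : Type*} [NormedAddCommGroup E] [NormedSpace ℝ E] [Nontrivial E] {D : Set E}

lemma infDist_compl_le_diam (hD : IsBounded D) (x : E) : infDist x Dᶜ ≤ diam D := by
  have hball : diam (ball x (infDist x Dᶜ)) ≤ diam D := diam_mono ball_infDist_compl_subset hD
  rw [diam_ball_eq x infDist_nonneg] at hball
  linarith [infDist_nonneg (x := x) (s := Dᶜ)]

lemma infDist_compl_pos (hDo : IsOpen D) (hDb : IsBounded D) {x : E} (hx : x ∈ D) :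
    0 < infDist x Dᶜ := by
  have hne : Dᶜ.Nonempty := by
    rw [nonempty_compl]
    rintro rfl
    exact NormedSpace.unbounded_univ ℝ E hDb
  exact (hDo.isClosed_compl.notMem_iff_infDist_pos hne).1 (notMem_compl_iff.2 hx)

variable [FiniteDimensional ℝ E] [MeasurableSpace E] [BorelSpace E] (μ : Measure E)
  [μ.IsAddHaarMeasure]

lemma locallyIntegrable_norm_rpow {β : ℝ} (hβ : -finrank ℝ E < β) :
    LocallyIntegrable (fun y : E => ‖y‖ ^ β) μ := by
  have hmeas : AEStronglyMeasurable (fun y : E => ‖y‖ ^ β) μ :=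
    (measurable_norm.pow_const β).aestronglyMeasurable
  refine locallyIntegrable_of_norm_le_rpow (C := 1) (α := -β) finrank_pos (by linarith)
    (ae_of_all μ fun y => ?_) hmeas
  rw [neg_neg, one_mul, Real.norm_of_nonneg (by positivity)]

lemma integrableOn_closedBall_dist_rpow {β : ℝ} (hβ : -finrank ℝ E < β) (x : E) (R : ℝ) :
    IntegrableOn (fun y => dist x y ^ β) (closedBall x R) μ := by
  have hball := (locallyIntegrable_norm_rpow μ hβ).integrableOn_isCompact
    (isCompact_closedBall 0 R)
  have hshift := ((measurePreserving_sub_right μ x).integrableOn_comp_preimage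
    (MeasurableEquiv.subRight x).measurableEmbedding).2 hball
  convert hshift using 1
  · ext y
    simp [dist_eq_norm_sub']
  · ext y
    simp [dist_eq_norm]

section Integral

variable {μ} {d : ℕ} {Φ ψ : ℝ → ℝ} {β K : ℝ}

lemma ae_killedGreen_nonneg (hΦpos : ∀ ⦃r⦄, 0 < r → 0 < Φ r) (hψpos : ∀ ⦃r⦄, 0 < r → 0 < ψ r)
    (x : E) : ∀ᵐ y ∂μ, 0 ≤ killedGreen d Φ ψ D x y := by
  filter_upwards [Measure.ae_ne μ x] with y hyx
  exact killedGreen_nonneg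
    (radialGreen_nonneg hψpos dist_nonneg (hΦpos (dist_pos.2 hyx.symm)))

lemma ae_killedGreen_le_rpow (hΦpos : ∀ ⦃r⦄, 0 < r → 0 < Φ r) (hψpos : ∀ ⦃r⦄, 0 < r → 0 < ψ r)
    (hDb : IsBounded D)
    (hK : ∀ r ∈ Ioc 0 (diam D), radialGreen d Φ ψ r / √(Φ r) ≤ K * r ^ β) {x : E} (hx : x ∈ D) :
    ∀ᵐ y ∂μ, y ∈ D →
      killedGreen d Φ ψ D x y ≤ √(Φ (infDist x Dᶜ)) * K * dist x y ^ β := by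
  filter_upwards [Measure.ae_ne μ x] with y hyx hy
  have hr : 0 < dist x y := dist_pos.2 hyx.symm
  calc killedGreen d Φ ψ D x y
      ≤ √(Φ (infDist x Dᶜ)) * (radialGreen d Φ ψ (dist x y) / √(Φ (dist x y))) :=
        killedGreen_le (radialGreen_nonneg hψpos hr.le (hΦpos hr))
    _ ≤ √(Φ (infDist x Dᶜ)) * (K * dist x y ^ β) := by
        gcongr
        exact hK _ ⟨hr, dist_le_diam_of_mem hDb hx hy⟩
    _ = √(Φ (infDist x Dᶜ)) * K * dist x y ^ β := (mul_assoc _ _ _).symm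

lemma integrableOn_killedGreen (hΦpos : ∀ ⦃r⦄, 0 < r → 0 < Φ r) (hΦmono : MonotoneOn Φ (Ioi 0))
    (hψpos : ∀ ⦃r⦄, 0 < r → 0 < ψ r) (hψmono : MonotoneOn ψ (Ioi 0)) (hDo : IsOpen D)
    (hDb : IsBounded D) (hβ : -finrank ℝ E < β)
    (hK : ∀ r ∈ Ioc 0 (diam D), radialGreen d Φ ψ r / √(Φ r) ≤ K * r ^ β) {x : E} (hx : x ∈ D) :
    IntegrableOn (killedGreen d Φ ψ D x) D μ := by
  have hdom : IntegrableOn (fun y => √(Φ (infDist x Dᶜ)) * K * dist x y ^ β) D μ :=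
    ((integrableOn_closedBall_dist_rpow μ hβ x _).mono_set
      fun _ hy => dist_le_diam_of_mem hDb hy hx).const_mul _
  refine hdom.mono' (aemeasurable_killedGreen hΦpos hΦmono hψmono hDo.measurableSet
    (fun _ => infDist_compl_pos hDo hDb) x).aestronglyMeasurable ?_
  filter_upwards [ae_restrict_of_ae (ae_killedGreen_nonneg hΦpos hψpos x),
    ae_restrict_of_ae (ae_killedGreen_le_rpow hΦpos hψpos hDb hK hx),
    ae_restrict_mem hDo.measurableSet] with y hnonneg hle hy
  rw [Real.norm_of_nonneg hnonneg]
  exact hle hy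

lemma setIntegral_killedGreen_le (hΦpos : ∀ ⦃r⦄, 0 < r → 0 < Φ r)
    (hΦmono : MonotoneOn Φ (Ioi 0)) (hψpos : ∀ ⦃r⦄, 0 < r → 0 < ψ r)
    (hψmono : MonotoneOn ψ (Ioi 0)) (hDo : IsOpen D) (hDb : IsBounded D) (hβ : -finrank ℝ E < β)
    (hK₀ : 0 ≤ K) (hK : ∀ r ∈ Ioc 0 (diam D), radialGreen d Φ ψ r / √(Φ r) ≤ K * r ^ β) {x : E}
    (hx : x ∈ D) :
    ∫ y in D, killedGreen d Φ ψ D x y ∂μ ≤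
      K * (∫ y in closedBall 0 (diam D), ‖y‖ ^ β ∂μ) * √(Φ (infDist x Dᶜ)) := by
  have hsub : D ⊆ closedBall x (diam D) := fun _ hy => dist_le_diam_of_mem hDb hy hx
  have hball := integrableOn_closedBall_dist_rpow μ hβ x (diam D)
  calc ∫ y in D, killedGreen d Φ ψ D x y ∂μ
      ≤ ∫ y in D, √(Φ (infDist x Dᶜ)) * K * dist x y ^ β ∂μ :=
        setIntegral_mono_on_ae
          (integrableOn_killedGreen hΦpos hΦmono hψpos hψmono hDo hDb hβ hK hx)
          ((hball.mono_set hsub).const_mul _) hDo.measurableSet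
          (ae_killedGreen_le_rpow hΦpos hψpos hDb hK hx)
    _ = √(Φ (infDist x Dᶜ)) * K * ∫ y in D, dist x y ^ β ∂μ := integral_const_mul _ _
    _ ≤ √(Φ (infDist x Dᶜ)) * K * ∫ y in closedBall x (diam D), dist x y ^ β ∂μ := by
        gcongr ?_ * ?_
        exact setIntegral_mono_set hball (ae_of_all _ fun y => by positivity) hsub.eventuallyLE
    _ = K * (∫ y in closedBall 0 (diam D), ‖y‖ ^ β ∂μ) * √(Φ (infDist x Dᶜ)) := by
        rw [setIntegral_closedBall_dist_rpow]
        ring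

lemma mul_measureReal_le_setIntegral_killedGreen (hΦpos : ∀ ⦃r⦄, 0 < r → 0 < Φ r)
    (hΦmono : MonotoneOn Φ (Ioi 0)) (hψpos : ∀ ⦃r⦄, 0 < r → 0 < ψ r)
    (hψmono : MonotoneOn ψ (Ioi 0)) (hDo : IsOpen D) (hDb : IsBounded D) {x : E} (hx : x ∈ D)
    (hint : IntegrableOn (killedGreen d Φ ψ D x) D μ) {A : Set E} (hA : MeasurableSet A)
    (hAD : A ⊆ D) {s t : ℝ} (hs : 0 < s) (ht : 0 < t) (hsA : ∀ y ∈ A, s ≤ dist x y)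
    (htA : ∀ y ∈ A, t ≤ infDist y Dᶜ) :
    √(Φ (infDist x Dᶜ)) / √(Φ (diam D)) * (√(Φ t) / √(Φ (diam D))) *
        (1 / (diam D ^ d * ψ (Φ s)⁻¹)) * μ.real A ≤
      ∫ y in D, killedGreen d Φ ψ D x y ∂μ := by
  refine (setIntegral_ge_of_const_le_real hA (hDb.subset hAD).measure_lt_top.ne
    (fun y hy => ?_) (hint.mono_set hAD)).trans
    (setIntegral_mono_set hint (ae_restrict_of_ae (ae_killedGreen_nonneg hΦpos hψpos x))
      hAD.eventuallyLE)
  exact le_killedGreen hΦpos hΦmono hψpos hψmono hs ht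
    ⟨infDist_compl_pos hDo hDb hx, infDist_compl_le_diam hDb x⟩
    ⟨htA y hy, infDist_compl_le_diam hDb y⟩
    ⟨hsA y hy, dist_le_diam_of_mem hDb hx (hAD hy)⟩

lemma exists_mul_sqrt_le_setIntegral_killedGreen (hΦpos : ∀ ⦃r⦄, 0 < r → 0 < Φ r)
    (hΦmono : MonotoneOn Φ (Ioi 0)) (hψpos : ∀ ⦃r⦄, 0 < r → 0 < ψ r)
    (hψmono : MonotoneOn ψ (Ioi 0)) (hDo : IsOpen D) (hDne : D.Nonempty) (hDb : IsBounded D)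
    (hint : ∀ x ∈ D, IntegrableOn (killedGreen d Φ ψ D x) D μ) :
    ∃ m, 0 < m ∧ ∀ x ∈ D,
      m * √(Φ (infDist x Dᶜ)) ≤ ∫ y in D, killedGreen d Φ ψ D x y ∂μ := by
  obtain ⟨x₀, hx₀⟩ := hDne
  have hδ₀ : 0 < infDist x₀ Dᶜ := infDist_compl_pos hDo hDb hx₀
  set ρ := infDist x₀ Dᶜ / 2
  have hρ : 0 < ρ := half_pos hδ₀
  have hball : closedBall x₀ ρ ⊆ D :=
    (closedBall_subset_ball (half_lt_self hδ₀)).trans ball_infDist_compl_subset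
  have hM : 0 < diam D := hδ₀.trans_le (infDist_compl_le_diam hDb x₀)
  have hsqrtM : 0 < √(Φ (diam D)) := Real.sqrt_pos.2 (hΦpos hM)
  have hsqrtρ : 0 < √(Φ ρ) := Real.sqrt_pos.2 (hΦpos hρ)
  have hψρ : 0 < ψ (Φ (ρ / 2))⁻¹ := hψpos (inv_pos.2 (hΦpos (half_pos hρ)))
  set m := √(Φ ρ) / √(Φ (diam D)) * (1 / (diam D ^ d * ψ (Φ (ρ / 2))⁻¹)) / √(Φ (diam D))
  set v := (ρ ^ finrank ℝ E - (ρ / 2) ^ finrank ℝ E) * μ.real (ball 0 1)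
  have hv : 0 < v := mul_pos
    (sub_pos.2 (pow_lt_pow_left₀ (half_lt_self hρ) (half_pos hρ).le finrank_pos.ne'))
    (ENNReal.toReal_pos (measure_ball_pos μ 0 one_pos).ne' measure_ball_lt_top.ne)
  refine ⟨m * v, by positivity, fun x hx => ?_⟩
  calc m * v * √(Φ (infDist x Dᶜ)) = √(Φ (infDist x Dᶜ)) * m * v := by ring
    _ ≤ √(Φ (infDist x Dᶜ)) * m * μ.real (closedBall x₀ ρ \ closedBall x (ρ / 2)) := by
        gcongr
        exact sub_mul_measureReal_ball_le_measureReal_closedBall_sdiff μ x₀ x hρ.le (half_pos hρ).le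
    _ = √(Φ (infDist x Dᶜ)) / √(Φ (diam D)) * (√(Φ ρ) / √(Φ (diam D))) *
          (1 / (diam D ^ d * ψ (Φ (ρ / 2))⁻¹)) *
          μ.real (closedBall x₀ ρ \ closedBall x (ρ / 2)) := by ring
    _ ≤ ∫ y in D, killedGreen d Φ ψ D x y ∂μ :=
        mul_measureReal_le_setIntegral_killedGreen hΦpos hΦmono hψpos hψmono hDo hDb hx (hint x hx)
          (measurableSet_closedBall.diff measurableSet_closedBall) (sdiff_subset.trans hball)
          (half_pos hρ) hρ (fun y hy => (not_le.1 (mt mem_closedBall'.2 hy.2)).le)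
          (fun y hy => half_infDist_le_infDist hy.1)

end Integral

theorem stmt_9_general {d : ℕ} (hd : finrank ℝ E = d) (hDo : IsOpen D) (hDne : D.Nonempty)
    (hDb : IsBounded D) {Φ ψ : ℝ → ℝ} {a b α γ : ℝ} (hΦ : LowerWeakScaling Φ a α)
    (hΦmono : MonotoneOn Φ (Ioi 0)) (hα : 0 < α) (hψ : LowerWeakScaling ψ b γ)
    (hψmono : MonotoneOn ψ (Ioi 0)) (hγ : 1 / 2 < γ) :
    ∃ C, 1 ≤ C ∧ ∀ x ∈ D,
      C⁻¹ * √(Φ (infDist x Dᶜ)) ≤ ∫ y in D, killedGreen d Φ ψ D x y ∂μ ∧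
      ∫ y in D, killedGreen d Φ ψ D x y ∂μ ≤ C * √(Φ (infDist x Dᶜ)) := by
  obtain ⟨x₀, hx₀⟩ := hDne
  have hM : 0 < diam D := (infDist_compl_pos hDo hDb hx₀).trans_le (infDist_compl_le_diam hDb x₀)
  obtain ⟨K, hK₀, hK⟩ := exists_radialGreen_div_sqrt_le (d := d) hΦ hΦmono hψ hγ.le hM
  have hexponent : -finrank ℝ E < α * (γ - 1 / 2) - d := by
    rw [hd]
    linarith [mul_pos hα (sub_pos.2 hγ)]
  obtain ⟨m, hm, hlower⟩ := exists_mul_sqrt_le_setIntegral_killedGreen (d := d) (μ := μ) hΦ.pos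
    hΦmono hψ.pos hψmono hDo ⟨x₀, hx₀⟩ hDb fun _ =>
      integrableOn_killedGreen hΦ.pos hΦmono hψ.pos hψmono hDo hDb hexponent hK
  set C := K * ∫ y in closedBall 0 (diam D), ‖y‖ ^ (α * (γ - 1 / 2) - d) ∂μ
  have hupper (x) (hx : x ∈ D) :
      ∫ y in D, killedGreen d Φ ψ D x y ∂μ ≤ C * √(Φ (infDist x Dᶜ)) :=
    setIntegral_killedGreen_le hΦ.pos hΦmono hψ.pos hψmono hDo hDb hexponent hK₀.le hK hx
  refine ⟨max 1 (max C m⁻¹), le_max_left _ _, fun x hx => ⟨?_, ?_⟩⟩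
  · refine le_trans ?_ (hlower x hx)
    gcongr
    exact inv_le_of_inv_le₀ hm ((le_max_right _ _).trans (le_max_right _ _))
  · refine (hupper x hx).trans ?_
    gcongr
    exact (le_max_left _ _).trans (le_max_right _ _)

end Haar

end

/-- Lemma 6.6 of the paper, analytic form: if the lower weak scaling index of
`ψ` exceeds `1/2`, then `∫_D G̃(x,y) dy ≍ Φ(δ_D(x))^{1/2}`. -/
theorem stmt_9 (d : ℕ) (hd : 2 ≤ d)
    (D : Set (EuclideanSpace ℝ (Fin d)))
    (hDopen : IsOpen D) (hDne : D.Nonempty) (hDbdd : Bornology.IsBounded D)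
    (Φ : ℝ → ℝ)
    (hΦmono : StrictMonoOn Φ (Set.Ioi 0))
    (hΦbij : Set.BijOn Φ (Set.Ioi 0) (Set.Ioi 0))
    (c₁ c₂ δ₁ δ₂ : ℝ) (hc₁ : 0 < c₁) (hc₂ : 0 < c₂)
    (hδ₁ : 0 < δ₁) (hδ : δ₁ ≤ δ₂) (hδ₂ : δ₂ < 1)
    (hΦscale : ∀ r R : ℝ, 0 < r → r ≤ R →
      c₁ * (R / r) ^ (2 * δ₁) ≤ Φ R / Φ r ∧ Φ R / Φ r ≤ c₂ * (R / r) ^ (2 * δ₂))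
    (ψ : ℝ → ℝ) (hψpos : ∀ x : ℝ, 0 < x → 0 < ψ x)
    (hψmono : MonotoneOn ψ (Set.Ioi 0))
    (b₁ b₂ γ₁ γ₂ : ℝ) (hb₁ : 0 < b₁) (hb₂ : 0 < b₂)
    (hγ₁ : 1 / 2 < γ₁) (hγ : γ₁ ≤ γ₂) (hγ₂ : γ₂ < 1)
    (hψscale : ∀ r R : ℝ, 0 < r → r ≤ R →
      b₁ * (R / r) ^ γ₁ ≤ ψ R / ψ r ∧ ψ R / ψ r ≤ b₂ * (R / r) ^ γ₂) :
    ∃ C : ℝ, 1 ≤ C ∧ ∀ x ∈ D,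
      C⁻¹ * Real.sqrt (Φ (Metric.infDist x Dᶜ)) ≤
        (∫ y in D,
          min (Real.sqrt (Φ (Metric.infDist x Dᶜ)) / Real.sqrt (Φ (dist x y))) 1 *
            min (Real.sqrt (Φ (Metric.infDist y Dᶜ)) / Real.sqrt (Φ (dist x y))) 1 *
            (1 / (dist x y ^ d * ψ ((Φ (dist x y))⁻¹)))) ∧
      (∫ y in D,
          min (Real.sqrt (Φ (Metric.infDist x Dᶜ)) / Real.sqrt (Φ (dist x y))) 1 *
            min (Real.sqrt (Φ (Metric.infDist y Dᶜ)) / Real.sqrt (Φ (dist x y))) 1 *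
            (1 / (dist x y ^ d * ψ ((Φ (dist x y))⁻¹)))) ≤
        C * Real.sqrt (Φ (Metric.infDist x Dᶜ)) := by
  have : Nonempty (Fin d) := ⟨⟨0, by omega⟩⟩
  exact stmt_9_general volume finrank_euclideanSpace_fin hDopen hDne hDbdd
    ⟨hc₁, fun _ hr => hΦbij.mapsTo hr, fun r R hr hrR => (hΦscale r R hr hrR).1⟩
    hΦmono.monotoneOn (mul_pos two_pos hδ₁)
    ⟨hb₁, hψpos, fun r R hr hrR => (hψscale r R hr hrR).1⟩ hψmono hγ₁
end

section
/- Let d ≥ 2 and let D ⊂ ℝ^d be a nonempty bounded open set. Let Φ : (0,∞) → (0,∞) be an increasing homeomorphism of (0,∞) onto itself satisfying the global weak scaling condition with exponents 2δ₁, 2δ₂ (0 < δ₁ ≤ δ₂ < 1), and let ψ : (0,∞) → (0,∞) be nondecreasing and satisfy the global weak scaling condition with exponents γ₁, γ₂ where 0 < γ₁ ≤ γ₂ < 1/2. Define g(r) := 1/(r^d·ψ(Φ(r)⁻¹)) and, for x, y ∈ D with x ≠ y, G̃(x,y) := min(Φ(δ_D(x))^{1/2}/Φ(|x−y|)^{1/2},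 1) · min(Φ(δ_D(y))^{1/2}/Φ(|x−y|)^{1/2}, 1) · g(|x−y|). Then there exists C ≥ 1 such that for every x ∈ D, C⁻¹/ψ(Φ(δ_D(x))⁻¹) ≤ ∫_D G̃(x,y) dy ≤ C/ψ(Φ(δ_D(x))⁻¹). -/
open MeasureTheory

/-!
Put `u = √Φ`, `h r = 1 / ψ (Φ(r)⁻¹)` and `δ = δ_D(x)`. The kernel is `h(|x - y|) / |x - y|^d` times
two cut-offs. For `|x - y| ≤ δ` the lower scaling of `h` gives a positive power of `|x - y| / δ`,
hence integrability at the diagonal. For `|x - y| ≥ δ` the first cut-off turns `h(|x - y|)` into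
`u(δ) (h / u)(|x - y|)`, and `h / u` has a negative scaling exponent exactly because `γ₂ < 1 / 2`.
After dilation by `δ` both regions contribute a multiple of `h(δ)`. Conversely, near `x` there is a
ball of radius comparable to `δ` on which both cut-offs equal `1` and `|x - y|` is comparable
to `δ`.
-/

open Set

section WeakScaling

/-- The lower half of the global weak scaling condition on `(0, ∞)` with exponent `α`; the constant
is quantified existentially. -/
def LowerWeakScaling_s10 (f : ℝ → ℝ) (α : ℝ) : Prop :=
  ∃ c > 0, ∀ ⦃r R : ℝ⦄, 0 < r → r ≤ R → c * (R / r) ^ α ≤ f R / f r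

/-- The upper half of the global weak scaling condition on `(0, ∞)` with exponent `α`; the constant
is quantified existentially. -/
def UpperWeakScaling (f : ℝ → ℝ) (α : ℝ) : Prop :=
  ∃ c > 0, ∀ ⦃r R : ℝ⦄, 0 < r → r ≤ R → f R / f r ≤ c * (R / r) ^ α

variable {f g : ℝ → ℝ} {α β : ℝ}

theorem LowerWeakScaling_s10.inv_comp_inv (hf : LowerWeakScaling_s10 f α) :
    LowerWeakScaling_s10 (fun t => (f t⁻¹)⁻¹) α := by
  obtain ⟨c, hc, hf⟩ := hf
  refine ⟨c, hc, fun r R hr hrR => ?_⟩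
  simpa only [inv_div_inv] using hf (inv_pos.2 (hr.trans_le hrR)) (inv_anti₀ hr hrR)

theorem UpperWeakScaling.inv_comp_inv (hf : UpperWeakScaling f α) :
    UpperWeakScaling (fun t => (f t⁻¹)⁻¹) α := by
  obtain ⟨c, hc, hf⟩ := hf
  refine ⟨c, hc, fun r R hr hrR => ?_⟩
  simpa only [inv_div_inv] using hf (inv_pos.2 (hr.trans_le hrR)) (inv_anti₀ hr hrR)

theorem UpperWeakScaling.mono_exponent (hf : UpperWeakScaling f α) (h : α ≤ β) :
    UpperWeakScaling f β := by
  obtain ⟨c, hc, hf⟩ := hf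
  refine ⟨c, hc, fun r R hr hrR => (hf hr hrR).trans ?_⟩
  have hRr : 1 ≤ R / r := (one_le_div hr).2 hrR
  gcongr

theorem UpperWeakScaling.div_rpow (hf : UpperWeakScaling f α) (β : ℝ) :
    UpperWeakScaling (fun t => f t / t ^ β) (α - β) := by
  obtain ⟨c, hc, hf⟩ := hf
  refine ⟨c, hc, fun r R hr hrR => ?_⟩
  have hR : 0 < R := hr.trans_le hrR
  calc f R / R ^ β / (f r / r ^ β) = f R / f r / (R / r) ^ β := by
        rw [div_div_div_comm, Real.div_rpow hR.le hr.le]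
    _ ≤ c * (R / r) ^ α / (R / r) ^ β := by gcongr; exact hf hr hrR
    _ = c * (R / r) ^ (α - β) := by rw [Real.rpow_sub (by positivity), mul_div_assoc]

theorem LowerWeakScaling_s10.comp (hf : LowerWeakScaling_s10 f α) (hα : 0 ≤ α)
    (hg : LowerWeakScaling_s10 g β) (hgpos : MapsTo g (Ioi 0) (Ioi 0))
    (hgmono : MonotoneOn g (Ioi 0)) :
    LowerWeakScaling_s10 (fun r => f (g r)) (β * α) := by
  obtain ⟨b, hb, hf⟩ := hf
  obtain ⟨c, hc, hg⟩ := hg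
  refine ⟨b * c ^ α, by positivity, fun r R hr hrR => ?_⟩
  have hR : 0 < R := hr.trans_le hrR
  calc b * c ^ α * (R / r) ^ (β * α) = b * (c * (R / r) ^ β) ^ α := by
        rw [Real.mul_rpow hc.le (by positivity), ← Real.rpow_mul (by positivity), mul_assoc]
    _ ≤ b * (g R / g r) ^ α := by gcongr; exact hg hr hrR
    _ ≤ f (g R) / f (g r) := hf (hgpos hr) (hgmono hr hR hrR)

theorem UpperWeakScaling.comp_of_nonneg (hf : UpperWeakScaling f α) (hα : 0 ≤ α)
    (hg : UpperWeakScaling g β) (hgpos : MapsTo g (Ioi 0) (Ioi 0))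
    (hgmono : MonotoneOn g (Ioi 0)) :
    UpperWeakScaling (fun r => f (g r)) (β * α) := by
  obtain ⟨b, hb, hf⟩ := hf
  obtain ⟨c, hc, hg⟩ := hg
  refine ⟨b * c ^ α, by positivity, fun r R hr hrR => ?_⟩
  have hR : 0 < R := hr.trans_le hrR
  calc f (g R) / f (g r) ≤ b * (g R / g r) ^ α := hf (hgpos hr) (hgmono hr hR hrR)
    _ ≤ b * (c * (R / r) ^ β) ^ α := by
        gcongr
        · exact (div_pos (hgpos hR) (hgpos hr)).le
        · exact hg hr hrR
    _ = b * c ^ α * (R / r) ^ (β * α) := by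
        rw [Real.mul_rpow hc.le (by positivity), ← Real.rpow_mul (by positivity), mul_assoc]

theorem UpperWeakScaling.comp_of_nonpos (hf : UpperWeakScaling f α) (hα : α ≤ 0)
    (hg : LowerWeakScaling_s10 g β) (hgpos : MapsTo g (Ioi 0) (Ioi 0))
    (hgmono : MonotoneOn g (Ioi 0)) :
    UpperWeakScaling (fun r => f (g r)) (β * α) := by
  obtain ⟨b, hb, hf⟩ := hf
  obtain ⟨c, hc, hg⟩ := hg
  refine ⟨b * c ^ α, by positivity, fun r R hr hrR => ?_⟩
  have hR : 0 < R := hr.trans_le hrR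
  calc f (g R) / f (g r) ≤ b * (g R / g r) ^ α := hf (hgpos hr) (hgmono hr hR hrR)
    _ ≤ b * (c * (R / r) ^ β) ^ α := by
        gcongr b * ?_
        exact Real.rpow_le_rpow_of_nonpos (by positivity) (hg hr hrR) hα
    _ = b * c ^ α * (R / r) ^ (β * α) := by
        rw [Real.mul_rpow hc.le (by positivity), ← Real.rpow_mul (by positivity), mul_assoc]

theorem LowerWeakScaling_s10.exists_le_mul (hf : LowerWeakScaling_s10 f α)
    (hfpos : MapsTo f (Ioi 0) (Ioi 0)) :
    ∃ C > 0, ∀ ⦃r R : ℝ⦄, 0 < r → r ≤ R → f r ≤ C * f R * (r / R) ^ α := by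
  obtain ⟨c, hc, hf⟩ := hf
  refine ⟨c⁻¹, inv_pos.2 hc, fun r R hr hrR => ?_⟩
  have hR : 0 < R := hr.trans_le hrR
  have hscale := (le_div_iff₀ (hfpos hr)).1 (hf hr hrR)
  rw [← inv_div R r, Real.inv_rpow (by positivity), ← div_eq_mul_inv, le_div_iff₀ (by positivity),
    le_inv_mul_iff₀ hc]
  linarith

theorem UpperWeakScaling.exists_le_mul (hf : UpperWeakScaling f α)
    (hfpos : MapsTo f (Ioi 0) (Ioi 0)) :
    ∃ C > 0, ∀ ⦃r R : ℝ⦄, 0 < r → r ≤ R → f R ≤ C * f r * (R / r) ^ α := by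
  obtain ⟨c, hc, hf⟩ := hf
  refine ⟨c, hc, fun r R hr hrR => ?_⟩
  rw [mul_right_comm]
  exact (div_le_iff₀ (hfpos hr)).1 (hf hr hrR)

theorem exists_min_div_mul_le_min_rpow {u h : ℝ → ℝ} (hu : MapsTo u (Ioi 0) (Ioi 0))
    (hh : MapsTo h (Ioi 0) (Ioi 0)) (hlower : LowerWeakScaling_s10 h α)
    (hupper : UpperWeakScaling (fun r => h r / u r) (-β)) (hαβ : -β ≤ α) :
    ∃ A > 0, ∀ ⦃r δ : ℝ⦄, 0 < r → 0 < δ →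
      min (u δ / u r) 1 * h r ≤ A * h δ * min ((r / δ) ^ α) ((r / δ) ^ (-β)) := by
  obtain ⟨a, ha, hlower⟩ := hlower.exists_le_mul hh
  obtain ⟨b, hb, hupper⟩ := hupper.exists_le_mul fun r hr => mem_Ioi.2 (div_pos (hh hr) (hu hr))
  refine ⟨max a b, by positivity, fun r δ hr hδ => ?_⟩
  have hhr : 0 < h r := hh hr
  have hhδ : 0 < h δ := hh hδ
  have huδ : 0 < u δ := hu hδ
  rcases le_total r δ with hrδ | hδr
  · have hmin : (r / δ) ^ α ≤ (r / δ) ^ (-β) :=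
      Real.rpow_le_rpow_of_exponent_ge (by positivity) ((div_le_one hδ).2 hrδ) hαβ
    rw [min_eq_left hmin]
    calc min (u δ / u r) 1 * h r ≤ 1 * h r := by gcongr; exact min_le_right _ _
      _ ≤ a * h δ * (r / δ) ^ α := by rw [one_mul]; exact hlower hr hrδ
      _ ≤ max a b * h δ * (r / δ) ^ α := by gcongr; exact le_max_left _ _
  · have hmin : (r / δ) ^ (-β) ≤ (r / δ) ^ α :=
      Real.rpow_le_rpow_of_exponent_le ((one_le_div hδ).2 hδr) hαβ
    rw [min_eq_right hmin]
    calc min (u δ / u r) 1 * h r ≤ u δ / u r * h r := by gcongr; exact min_le_left _ _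
      _ = u δ * (h r / u r) := by ring
      _ ≤ u δ * (b * (h δ / u δ) * (r / δ) ^ (-β)) := by gcongr; exact hupper hδ hδr
      _ = b * h δ * (r / δ) ^ (-β) := by field_simp
      _ ≤ max a b * h δ * (r / δ) ^ (-β) := by gcongr; exact le_max_right _ _

end WeakScaling

section MeasureTheory

variable {X : Type*} [MeasurableSpace X] {ν : Measure X}

theorem aemeasurable_comp_of_monotoneOn_s10 {g : ℝ → ℝ} {s : Set ℝ} (hs : MeasurableSet s)
    (hg : MonotoneOn g s) {f : X → ℝ} (hf : AEMeasurable f ν) (hfs : ∀ᵐ a ∂ν, f a ∈ s) :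
    AEMeasurable (fun a => g (f a)) ν := by
  have hg' : AEMeasurable g ((ν.map f).restrict s) := aemeasurable_restrict_of_monotoneOn hs hg
  rw [Measure.restrict_eq_self_of_ae_mem ((ae_map_iff hf hs).2 hfs)] at hg'
  exact hg'.comp_aemeasurable hf

theorem mul_measureReal_le_setIntegral {s t : Set X} {f : X → ℝ} {c : ℝ} (hs : MeasurableSet s)
    (hst : s ⊆ t) (ht : MeasurableSet t) (hνs : ν s ≠ ⊤) (hf : IntegrableOn f t ν)
    (hf0 : ∀ y ∈ t, 0 ≤ f y) (hc : ∀ y ∈ s, c ≤ f y) :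
    c * ν.real s ≤ ∫ y in t, f y ∂ν :=
  (setIntegral_ge_of_const_le_real hs hνs hc (hf.mono_set hst)).trans <|
    setIntegral_mono_set hf ((ae_restrict_mem ht).mono hf0) hst.eventuallyLE

end MeasureTheory

section PowerProfile

open Module

theorem integrableOn_Ioi_inv_mul_min_rpow {α β : ℝ} (hα : 0 < α) (hβ : 0 < β) :
    IntegrableOn (fun r : ℝ => r⁻¹ * min (r ^ α) (r ^ (-β))) (Ioi 0) := by
  have hmeas : Measurable fun r : ℝ => r⁻¹ * min (r ^ α) (r ^ (-β)) := by fun_prop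
  have hnorm {r : ℝ} (hr : 0 < r) :
      ‖r⁻¹ * min (r ^ α) (r ^ (-β))‖ = r⁻¹ * min (r ^ α) (r ^ (-β)) :=
    Real.norm_of_nonneg (by positivity)
  have hzero : IntegrableOn (fun r : ℝ => r ^ (α - 1)) (Ioc 0 1) := by
    rw [← intervalIntegrable_iff_integrableOn_Ioc_of_le zero_le_one]
    exact intervalIntegral.intervalIntegrable_rpow' (by linarith)
  have hinfty : IntegrableOn (fun r : ℝ => r ^ (-β - 1)) (Ioi 1) :=
    integrableOn_Ioi_rpow_of_lt (by linarith) one_pos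
  rw [← Ioc_union_Ioi_eq_Ioi (zero_le_one (α := ℝ))]
  refine IntegrableOn.union (hzero.mono' hmeas.aestronglyMeasurable ?_)
    (hinfty.mono' hmeas.aestronglyMeasurable ?_)
  · filter_upwards [ae_restrict_mem measurableSet_Ioc] with r hr
    have hr0 : 0 < r := hr.1
    rw [hnorm hr0, Real.rpow_sub_one hr0.ne', div_eq_inv_mul]
    gcongr
    exact min_le_left _ _
  · filter_upwards [ae_restrict_mem measurableSet_Ioi] with r hr
    have hr0 : 0 < r := one_pos.trans hr
    rw [hnorm hr0, Real.rpow_sub_one hr0.ne', div_eq_inv_mul]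
    gcongr
    exact min_le_right _ _

variable {E : Type*} [NormedAddCommGroup E] [NormedSpace ℝ E]

/-- The radial function `‖z‖ ^ (α - n)` inside and `‖z‖ ^ (-β - n)` outside the unit ball,
where `n = dim E`; it is the integrable majorant of the dilated kernel. -/
noncomputable def powerProfile (α β : ℝ) (z : E) : ℝ :=
  (‖z‖ ^ finrank ℝ E)⁻¹ * min (‖z‖ ^ α) (‖z‖ ^ (-β))

theorem powerProfile_nonneg (α β : ℝ) (z : E) : 0 ≤ powerProfile α β z := by
  unfold powerProfile
  positivity

variable [FiniteDimensional ℝ E] [MeasurableSpace E] [BorelSpace E]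
  (μ : Measure E) [μ.IsAddHaarMeasure]

theorem integrable_powerProfile [Nontrivial E] {α β : ℝ} (hα : 0 < α) (hβ : 0 < β) :
    Integrable (powerProfile α β : E → ℝ) μ := by
  unfold powerProfile
  rw [integrable_fun_norm_addHaar μ
    (f := fun r : ℝ => (r ^ finrank ℝ E)⁻¹ * min (r ^ α) (r ^ (-β)))]
  refine (integrableOn_Ioi_inv_mul_min_rpow hα hβ).congr_fun (fun r hr => ?_) measurableSet_Ioi
  have hpow : r ^ finrank ℝ E = r ^ (finrank ℝ E - 1) * r :=
    (pow_sub_one_mul finrank_pos.ne' r).symm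
  have hr0 : 0 < r := hr
  simp only [smul_eq_mul, hpow]
  field_simp

theorem integral_comp_inv_smul_sub (F : E → ℝ) {δ : ℝ} (hδ : 0 < δ) (x : E) :
    ∫ y, (δ ^ finrank ℝ E)⁻¹ * F (δ⁻¹ • (y - x)) ∂μ = ∫ z, F z ∂μ := by
  rw [integral_const_mul, integral_sub_right_eq_self (fun z => F (δ⁻¹ • z)) x,
    Measure.integral_comp_inv_smul_of_nonneg μ F hδ.le, smul_eq_mul,
    inv_mul_cancel_left₀ (by positivity)]

end PowerProfile

section CutoffKernel

open Module Metric

theorem infDist_compl_pos_of_isOpen {X : Type*} [PseudoMetricSpace X] {D : Set X} (hD : IsOpen D)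
    (hDc : Dᶜ.Nonempty) {x : X} (hx : x ∈ D) : 0 < infDist x Dᶜ :=
  (hD.isClosed_compl.notMem_iff_infDist_pos hDc).1 (notMem_compl_iff.2 hx)

variable {E : Type*} [NormedAddCommGroup E] [NormedSpace ℝ E]

/-- The kernel `G̃` with radial part `h(|x - y|) / |x - y| ^ dim E`, damped by the boundary weight
`u`; the distance `δ_D` to the complement is `infDist · Dᶜ`. -/
noncomputable def cutoffKernel (D : Set E) (u h : ℝ → ℝ) (x y : E) : ℝ :=
  min (u (infDist x Dᶜ) / u (dist x y)) 1 * min (u (infDist y Dᶜ) / u (dist x y)) 1 *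
    (h (dist x y) / dist x y ^ finrank ℝ E)

variable {D : Set E} {u h : ℝ → ℝ} {x y : E}

theorem cutoffKernel_self [FiniteDimensional ℝ E] [Nontrivial E] (D : Set E) (u h : ℝ → ℝ)
    (x : E) : cutoffKernel D u h x x = 0 := by
  simp [cutoffKernel, (finrank_pos (R := ℝ) (M := E)).ne']

theorem cutoffKernel_nonneg [FiniteDimensional ℝ E] [Nontrivial E]
    (hu : MapsTo u (Ioi 0) (Ioi 0)) (hh : MapsTo h (Ioi 0) (Ioi 0))
    (hx : 0 < infDist x Dᶜ) (hy : 0 < infDist y Dᶜ) : 0 ≤ cutoffKernel D u h x y := by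
  rcases eq_or_ne x y with rfl | hxy
  · exact (cutoffKernel_self D u h x).ge
  have hux : 0 < u (infDist x Dᶜ) := hu hx
  have huy : 0 < u (infDist y Dᶜ) := hu hy
  have hur : 0 < u (dist x y) := hu (dist_pos.2 hxy)
  have hhr : 0 < h (dist x y) := hh (dist_pos.2 hxy)
  unfold cutoffKernel
  positivity

theorem cutoffKernel_eq_of_dist_le (hu : MapsTo u (Ioi 0) (Ioi 0)) (humono : MonotoneOn u (Ioi 0))
    (hxy : x ≠ y) (hx : dist x y ≤ infDist x Dᶜ) (hy : dist x y ≤ infDist y Dᶜ) :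
    cutoffKernel D u h x y = h (dist x y) / dist x y ^ finrank ℝ E := by
  have hr : 0 < dist x y := dist_pos.2 hxy
  have hcutoff {s : ℝ} (hs : dist x y ≤ s) : min (u s / u (dist x y)) 1 = 1 :=
    min_eq_right ((one_le_div (hu hr)).2 (humono hr (hr.trans_le hs) hs))
  rw [cutoffKernel, hcutoff hx, hcutoff hy, one_mul, one_mul]

theorem le_cutoffKernel_of_mem_ball (hu : MapsTo u (Ioi 0) (Ioi 0))
    (humono : MonotoneOn u (Ioi 0)) (hh : MapsTo h (Ioi 0) (Ioi 0))
    (hhmono : MonotoneOn h (Ioi 0)) {x₀ : E} {s : ℝ} (hs : 0 < s)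
    (hx : infDist x Dᶜ = 6 * s) (hx₀ : dist x x₀ = 2 * s) (hy : y ∈ ball x₀ s) :
    h s / (3 * s) ^ finrank ℝ E ≤ cutoffKernel D u h x y := by
  rw [mem_ball] at hy
  have hlow : s ≤ dist x y := by linarith [dist_triangle_right x x₀ y, dist_comm y x₀]
  have hhigh : dist x y ≤ 3 * s := by linarith [dist_triangle x x₀ y, dist_comm y x₀]
  have hr : 0 < dist x y := hs.trans_le hlow
  have hxδ : dist x y ≤ infDist x Dᶜ := by linarith
  have hyδ : dist x y ≤ infDist y Dᶜ := by
    linarith [infDist_le_infDist_add_dist (s := Dᶜ) (x := x) (y := y)]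
  rw [cutoffKernel_eq_of_dist_le hu humono (dist_pos.1 hr) hxδ hyδ]
  have hhr : 0 < h (dist x y) := hh hr
  gcongr
  exact hhmono hs hr hlow

theorem cutoffKernel_le_powerProfile [FiniteDimensional ℝ E] [Nontrivial E] {A α β : ℝ}
    (hA : 0 ≤ A) (hu : MapsTo u (Ioi 0) (Ioi 0)) (hh : MapsTo h (Ioi 0) (Ioi 0))
    (hle : ∀ ⦃r δ : ℝ⦄, 0 < r → 0 < δ →
      min (u δ / u r) 1 * h r ≤ A * h δ * min ((r / δ) ^ α) ((r / δ) ^ (-β)))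
    (hx : 0 < infDist x Dᶜ) :
    cutoffKernel D u h x y ≤ A * h (infDist x Dᶜ) *
      ((infDist x Dᶜ ^ finrank ℝ E)⁻¹ * powerProfile α β ((infDist x Dᶜ)⁻¹ • (y - x))) := by
  set δ := infDist x Dᶜ with hδ
  have hhδ : 0 < h δ := hh hx
  rcases eq_or_ne x y with rfl | hxy
  · rw [cutoffKernel_self]
    have := powerProfile_nonneg α β (δ⁻¹ • (x - x))
    positivity
  have hr : 0 < dist x y := dist_pos.2 hxy
  have hur : 0 < u (dist x y) := hu hr
  have huδ : 0 < u δ := hu hx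
  have hhr : 0 < h (dist x y) := hh hr
  have hnorm : ‖δ⁻¹ • (y - x)‖ = dist x y / δ := by
    rw [norm_smul, norm_inv, Real.norm_of_nonneg hx.le, dist_comm, dist_eq_norm, div_eq_inv_mul]
  calc cutoffKernel D u h x y
      ≤ min (u δ / u (dist x y)) 1 * 1 * (h (dist x y) / dist x y ^ finrank ℝ E) := by
        rw [cutoffKernel, ← hδ]
        gcongr
        exact min_le_right _ _
    _ = min (u δ / u (dist x y)) 1 * h (dist x y) * (dist x y ^ finrank ℝ E)⁻¹ := by ring
    _ ≤ A * h δ * min ((dist x y / δ) ^ α) ((dist x y / δ) ^ (-β)) *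
          (dist x y ^ finrank ℝ E)⁻¹ :=
        mul_le_mul_of_nonneg_right (hle hr hx) (by positivity)
    _ = A * h δ * ((δ ^ finrank ℝ E)⁻¹ * powerProfile α β (δ⁻¹ • (y - x))) := by
        rw [powerProfile, hnorm, div_pow]
        field_simp

variable [FiniteDimensional ℝ E] [Nontrivial E] [MeasurableSpace E] [BorelSpace E]
  (μ : Measure E) [μ.IsAddHaarMeasure]

theorem aestronglyMeasurable_cutoffKernel (hD : IsOpen D) (hDc : Dᶜ.Nonempty)
    (humono : MonotoneOn u (Ioi 0)) (hhmono : MonotoneOn h (Ioi 0)) (x : E) :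
    AEStronglyMeasurable (cutoffKernel D u h x) (μ.restrict D) := by
  have hdist : AEMeasurable (fun y => dist x y) (μ.restrict D) := by fun_prop
  have hdistpos : ∀ᵐ y ∂μ.restrict D, dist x y ∈ Ioi 0 := by
    filter_upwards [ae_restrict_of_ae (compl_mem_ae_iff.2 (measure_singleton (μ := μ) x))] with y hy
    exact dist_pos.2 (Ne.symm hy)
  have hinfDist : AEMeasurable (fun y => infDist y Dᶜ) (μ.restrict D) := by fun_prop
  have hinfDistpos : ∀ᵐ y ∂μ.restrict D, infDist y Dᶜ ∈ Ioi 0 :=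
    (ae_restrict_mem hD.measurableSet).mono fun y hy => infDist_compl_pos_of_isOpen hD hDc hy
  have hudist := aemeasurable_comp_of_monotoneOn_s10 measurableSet_Ioi humono hdist hdistpos
  have huinfDist := aemeasurable_comp_of_monotoneOn_s10 measurableSet_Ioi humono hinfDist hinfDistpos
  have hhdist := aemeasurable_comp_of_monotoneOn_s10 measurableSet_Ioi hhmono hdist hdistpos
  exact ((((hudist.const_div _).min aemeasurable_const).mul
    ((huinfDist.div hudist).min aemeasurable_const)).mul
    (hhdist.div (hdist.pow_const _))).aestronglyMeasurable

theorem exists_integrableOn_and_setIntegral_cutoffKernel_le {α β : ℝ} (hD : IsOpen D)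
    (hDc : Dᶜ.Nonempty) (hu : MapsTo u (Ioi 0) (Ioi 0)) (humono : MonotoneOn u (Ioi 0))
    (hh : MapsTo h (Ioi 0) (Ioi 0)) (hhmono : MonotoneOn h (Ioi 0))
    (hα : 0 < α) (hlower : LowerWeakScaling_s10 h α)
    (hβ : 0 < β) (hupper : UpperWeakScaling (fun r => h r / u r) (-β)) :
    ∃ C, ∀ x ∈ D, IntegrableOn (cutoffKernel D u h x) D μ ∧
      ∫ y in D, cutoffKernel D u h x y ∂μ ≤ C * h (infDist x Dᶜ) := by
  obtain ⟨A, hA, hle⟩ := exists_min_div_mul_le_min_rpow hu hh hlower hupper (by linarith)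
  refine ⟨A * ∫ z : E, powerProfile α β z ∂μ, fun x hx => ?_⟩
  set δ := infDist x Dᶜ
  have hδ : 0 < δ := infDist_compl_pos_of_isOpen hD hDc hx
  have hhδ : 0 < h δ := hh hδ
  set majorant : E → ℝ := fun y =>
    A * h δ * ((δ ^ finrank ℝ E)⁻¹ * powerProfile α β (δ⁻¹ • (y - x)))
  have hmajorant : Integrable majorant μ :=
    ((((integrable_powerProfile μ hα hβ).comp_smul (inv_ne_zero hδ.ne')).comp_sub_right x).const_mul
      _).const_mul _
  have hmajorant0 (y : E) : 0 ≤ majorant y := by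
    have := powerProfile_nonneg α β (δ⁻¹ • (y - x))
    positivity
  have hkernel_le (y : E) : cutoffKernel D u h x y ≤ majorant y :=
    cutoffKernel_le_powerProfile hA.le hu hh hle hδ
  have hint : IntegrableOn (cutoffKernel D u h x) D μ := by
    refine hmajorant.integrableOn.mono'
      (aestronglyMeasurable_cutoffKernel μ hD hDc humono hhmono x) ?_
    filter_upwards [ae_restrict_mem hD.measurableSet] with y hy
    rw [Real.norm_of_nonneg
      (cutoffKernel_nonneg hu hh hδ (infDist_compl_pos_of_isOpen hD hDc hy))]
    exact hkernel_le y
  refine ⟨hint, ?_⟩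
  calc ∫ y in D, cutoffKernel D u h x y ∂μ ≤ ∫ y in D, majorant y ∂μ :=
        setIntegral_mono hint hmajorant.integrableOn hkernel_le
    _ ≤ ∫ y, majorant y ∂μ := setIntegral_le_integral hmajorant (ae_of_all _ hmajorant0)
    _ = A * (∫ z : E, powerProfile α β z ∂μ) * h δ := by
        rw [integral_const_mul, integral_comp_inv_smul_sub μ _ hδ]
        ring

theorem le_setIntegral_cutoffKernel (hD : IsOpen D) (hDc : Dᶜ.Nonempty)
    (hu : MapsTo u (Ioi 0) (Ioi 0)) (humono : MonotoneOn u (Ioi 0))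
    (hh : MapsTo h (Ioi 0) (Ioi 0)) (hhmono : MonotoneOn h (Ioi 0))
    (hint : IntegrableOn (cutoffKernel D u h x) D μ) {s : ℝ} (hs : 0 < s)
    (hx : infDist x Dᶜ = 6 * s) :
    h s * (μ.real (ball (0 : E) 1) / 3 ^ finrank ℝ E) ≤ ∫ y in D, cutoffKernel D u h x y ∂μ := by
  obtain ⟨v, hv⟩ := exists_norm_eq E (c := 2 * s) (by positivity)
  have hx₀ : dist x (x + v) = 2 * s := by rw [dist_self_add_right, hv]
  have hball : ball (x + v) s ⊆ D := fun y hy => ball_infDist_compl_subset <| by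
    rw [mem_ball] at hy ⊢
    linarith [dist_triangle y (x + v) x, dist_comm x (x + v)]
  have hvolume : μ.real (ball (x + v) s) = s ^ finrank ℝ E * μ.real (ball (0 : E) 1) := by
    rw [← Measure.addHaar_real_closedBall_eq_addHaar_real_ball,
      Measure.addHaar_real_closedBall μ _ hs.le]
  calc h s * (μ.real (ball (0 : E) 1) / 3 ^ finrank ℝ E)
      = h s / (3 * s) ^ finrank ℝ E * μ.real (ball (x + v) s) := by
        rw [hvolume, mul_pow]
        field_simp
    _ ≤ ∫ y in D, cutoffKernel D u h x y ∂μ :=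
        mul_measureReal_le_setIntegral measurableSet_ball hball hD.measurableSet
          measure_ball_lt_top.ne hint
          (fun y hy => cutoffKernel_nonneg hu hh (by linarith)
            (infDist_compl_pos_of_isOpen hD hDc hy))
          fun y hy => le_cutoffKernel_of_mem_ball hu humono hh hhmono hs hx hx₀ hy

theorem exists_mul_le_setIntegral_cutoffKernel {η : ℝ} (hD : IsOpen D) (hDc : Dᶜ.Nonempty)
    (hu : MapsTo u (Ioi 0) (Ioi 0)) (humono : MonotoneOn u (Ioi 0))
    (hh : MapsTo h (Ioi 0) (Ioi 0)) (hhmono : MonotoneOn h (Ioi 0)) (hupper : UpperWeakScaling h η)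
    (hint : ∀ x ∈ D, IntegrableOn (cutoffKernel D u h x) D μ) :
    ∃ c > 0, ∀ x ∈ D, c * h (infDist x Dᶜ) ≤ ∫ y in D, cutoffKernel D u h x y ∂μ := by
  obtain ⟨b, hb, hupper⟩ := hupper.exists_le_mul hh
  have hV : 0 < μ.real (ball (0 : E) 1) :=
    ENNReal.toReal_pos (measure_ball_pos μ _ one_pos).ne' measure_ball_lt_top.ne
  refine ⟨(b * 6 ^ η)⁻¹ * (μ.real (ball (0 : E) 1) / 3 ^ finrank ℝ E), by positivity,
    fun x hx => ?_⟩
  have hδ : 0 < infDist x Dᶜ := infDist_compl_pos_of_isOpen hD hDc hx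
  obtain ⟨s, hδs⟩ : ∃ s, infDist x Dᶜ = 6 * s := ⟨infDist x Dᶜ / 6, by ring⟩
  have hs : 0 < s := by linarith
  have hcomparable : (b * 6 ^ η)⁻¹ * h (6 * s) ≤ h s := by
    rw [inv_mul_le_iff₀ (by positivity), mul_right_comm]
    simpa only [mul_div_cancel_right₀ _ hs.ne'] using hupper hs (by linarith : s ≤ 6 * s)
  refine le_trans ?_ (le_setIntegral_cutoffKernel μ hD hDc hu humono hh hhmono (hint x hx) hs hδs)
  rw [mul_right_comm, hδs]
  gcongr

theorem exists_setIntegral_cutoffKernel_comparable {α β η : ℝ} (hD : IsOpen D)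
    (hDc : Dᶜ.Nonempty) (hu : MapsTo u (Ioi 0) (Ioi 0)) (humono : MonotoneOn u (Ioi 0))
    (hh : MapsTo h (Ioi 0) (Ioi 0)) (hhmono : MonotoneOn h (Ioi 0))
    (hα : 0 < α) (hlower : LowerWeakScaling_s10 h α) (hupper : UpperWeakScaling h η)
    (hβ : 0 < β) (hdecay : UpperWeakScaling (fun r => h r / u r) (-β)) :
    ∃ C : ℝ, 1 ≤ C ∧ ∀ x ∈ D,
      C⁻¹ * h (infDist x Dᶜ) ≤ ∫ y in D, cutoffKernel D u h x y ∂μ ∧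
      ∫ y in D, cutoffKernel D u h x y ∂μ ≤ C * h (infDist x Dᶜ) := by
  obtain ⟨K, hK⟩ := exists_integrableOn_and_setIntegral_cutoffKernel_le μ hD hDc hu humono hh hhmono
    hα hlower hβ hdecay
  obtain ⟨c, hc, hle⟩ := exists_mul_le_setIntegral_cutoffKernel μ hD hDc hu humono hh hhmono hupper
    fun x hx => (hK x hx).1
  refine ⟨max 1 (max K c⁻¹), le_max_left _ _, fun x hx => ?_⟩
  have hhδ : 0 < h (infDist x Dᶜ) := hh (infDist_compl_pos_of_isOpen hD hDc hx)
  constructor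
  · refine le_trans ?_ (hle x hx)
    gcongr
    exact inv_le_of_inv_le₀ hc ((le_max_right _ _).trans (le_max_right _ _))
  · refine (hK x hx).2.trans ?_
    gcongr
    exact (le_max_left _ _).trans (le_max_right _ _)

theorem stmt_10_general (hD : IsOpen D) (hDc : Dᶜ.Nonempty) {Φ ψ : ℝ → ℝ} {α β γ₁ γ₂ : ℝ}
    (hΦpos : MapsTo Φ (Ioi 0) (Ioi 0)) (hΦmono : MonotoneOn Φ (Ioi 0))
    (hα : 0 < α) (hΦlower : LowerWeakScaling_s10 Φ α) (hΦupper : UpperWeakScaling Φ β)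
    (hψpos : MapsTo ψ (Ioi 0) (Ioi 0)) (hψmono : MonotoneOn ψ (Ioi 0))
    (hγ₁ : 0 < γ₁) (hψlower : LowerWeakScaling_s10 ψ γ₁)
    (hγ₂ : γ₂ < 1 / 2) (hψupper : UpperWeakScaling ψ γ₂) :
    ∃ C : ℝ, 1 ≤ C ∧ ∀ x ∈ D,
      C⁻¹ * (ψ ((Φ (infDist x Dᶜ))⁻¹))⁻¹ ≤
        (∫ y in D, min (√(Φ (infDist x Dᶜ)) / √(Φ (dist x y))) 1 *
          min (√(Φ (infDist y Dᶜ)) / √(Φ (dist x y))) 1 *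
          (1 / (dist x y ^ finrank ℝ E * ψ ((Φ (dist x y))⁻¹))) ∂μ) ∧
      (∫ y in D, min (√(Φ (infDist x Dᶜ)) / √(Φ (dist x y))) 1 *
          min (√(Φ (infDist y Dᶜ)) / √(Φ (dist x y))) 1 *
          (1 / (dist x y ^ finrank ℝ E * ψ ((Φ (dist x y))⁻¹))) ∂μ) ≤
        C * (ψ ((Φ (infDist x Dᶜ))⁻¹))⁻¹ := by
  have hΦinv : MapsTo (fun r => (Φ r)⁻¹) (Ioi 0) (Ioi 0) := fun _ hr =>
    mem_Ioi.2 (inv_pos.2 (hΦpos hr))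
  have hh : MapsTo (fun r => (ψ (Φ r)⁻¹)⁻¹) (Ioi 0) (Ioi 0) := fun _ hr =>
    mem_Ioi.2 (inv_pos.2 (hψpos (hΦinv hr)))
  have hhmono : MonotoneOn (fun r => (ψ (Φ r)⁻¹)⁻¹) (Ioi 0) := fun r hr s hs hrs =>
    inv_anti₀ (hψpos (hΦinv hs))
      (hψmono (hΦinv hs) (hΦinv hr) (inv_anti₀ (hΦpos hr) (hΦmono hr hs hrs)))
  have hlower : LowerWeakScaling_s10 (fun r => (ψ (Φ r)⁻¹)⁻¹) (α * γ₁) :=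
    hψlower.inv_comp_inv.comp hγ₁.le hΦlower hΦpos hΦmono
  have hupper : UpperWeakScaling (fun r => (ψ (Φ r)⁻¹)⁻¹) (β * (1 / 2)) :=
    (hψupper.mono_exponent hγ₂.le).inv_comp_inv.comp_of_nonneg (by norm_num) hΦupper hΦpos hΦmono
  have hdecay : UpperWeakScaling (fun r => (ψ (Φ r)⁻¹)⁻¹ / √(Φ r)) (-(α * (1 / 2 - γ₂))) := by
    simp only [Real.sqrt_eq_rpow]
    convert (hψupper.inv_comp_inv.div_rpow (1 / 2)).comp_of_nonpos (by linarith) hΦlower hΦpos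
      hΦmono using 1
    ring
  have hkernel (x y : E) :
      cutoffKernel D (fun r => √(Φ r)) (fun r => (ψ (Φ r)⁻¹)⁻¹) x y =
        min (√(Φ (infDist x Dᶜ)) / √(Φ (dist x y))) 1 *
          min (√(Φ (infDist y Dᶜ)) / √(Φ (dist x y))) 1 *
          (1 / (dist x y ^ finrank ℝ E * ψ ((Φ (dist x y))⁻¹))) := by
    rw [cutoffKernel, one_div, mul_inv_rev, div_eq_mul_inv (ψ _)⁻¹]
  simpa only [hkernel] using
    exists_setIntegral_cutoffKernel_comparable μ hD hDc (u := fun r => √(Φ r))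
      (fun _ hr => Real.sqrt_pos.2 (hΦpos hr))
      (fun r hr s hs hrs => Real.sqrt_le_sqrt (hΦmono hr hs hrs)) hh hhmono
      (mul_pos hα hγ₁) hlower hupper (mul_pos hα (sub_pos.2 hγ₂)) hdecay

end CutoffKernel

/-- Statement 9 (Lemma 6.7 of the paper, analytic form): if the upper weak scaling index of
`ψ` is below `1/2`, then `∫_D G̃(x,y) dy ≍ 1/ψ(Φ(δ_D(x))⁻¹)`. -/
theorem stmt_10 (d : ℕ) (hd : 2 ≤ d)
    (D : Set (EuclideanSpace ℝ (Fin d)))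
    (hDopen : IsOpen D) (hDne : D.Nonempty) (hDbdd : Bornology.IsBounded D)
    (Φ : ℝ → ℝ)
    (hΦmono : StrictMonoOn Φ (Set.Ioi 0))
    (hΦbij : Set.BijOn Φ (Set.Ioi 0) (Set.Ioi 0))
    (c₁ c₂ δ₁ δ₂ : ℝ) (hc₁ : 0 < c₁) (hc₂ : 0 < c₂)
    (hδ₁ : 0 < δ₁) (hδ : δ₁ ≤ δ₂) (hδ₂ : δ₂ < 1)
    (hΦscale : ∀ r R : ℝ, 0 < r → r ≤ R →
      c₁ * (R / r) ^ (2 * δ₁) ≤ Φ R / Φ r ∧ Φ R / Φ r ≤ c₂ * (R / r) ^ (2 * δ₂))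
    (ψ : ℝ → ℝ) (hψpos : ∀ x : ℝ, 0 < x → 0 < ψ x)
    (hψmono : MonotoneOn ψ (Set.Ioi 0))
    (b₁ b₂ γ₁ γ₂ : ℝ) (hb₁ : 0 < b₁) (hb₂ : 0 < b₂)
    (hγ₁ : 0 < γ₁) (hγ : γ₁ ≤ γ₂) (hγ₂ : γ₂ < 1 / 2)
    (hψscale : ∀ r R : ℝ, 0 < r → r ≤ R →
      b₁ * (R / r) ^ γ₁ ≤ ψ R / ψ r ∧ ψ R / ψ r ≤ b₂ * (R / r) ^ γ₂) :
    ∃ C : ℝ, 1 ≤ C ∧ ∀ x ∈ D,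
      C⁻¹ * (ψ ((Φ (Metric.infDist x Dᶜ))⁻¹))⁻¹ ≤
        (∫ y in D,
          min (Real.sqrt (Φ (Metric.infDist x Dᶜ)) / Real.sqrt (Φ (dist x y))) 1 *
            min (Real.sqrt (Φ (Metric.infDist y Dᶜ)) / Real.sqrt (Φ (dist x y))) 1 *
            (1 / (dist x y ^ d * ψ ((Φ (dist x y))⁻¹)))) ∧
      (∫ y in D,
          min (Real.sqrt (Φ (Metric.infDist x Dᶜ)) / Real.sqrt (Φ (dist x y))) 1 *
            min (Real.sqrt (Φ (Metric.infDist y Dᶜ)) / Real.sqrt (Φ (dist x y))) 1 *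
            (1 / (dist x y ^ d * ψ ((Φ (dist x y))⁻¹)))) ≤
        C * (ψ ((Φ (Metric.infDist x Dᶜ))⁻¹))⁻¹ := by
  have : Nonempty (Fin d) := ⟨⟨0, by omega⟩⟩
  have hDc : (Dᶜ).Nonempty := Set.nonempty_compl.2 fun h =>
    NormedSpace.unbounded_univ ℝ (EuclideanSpace ℝ (Fin d)) (h ▸ hDbdd)
  simpa only [finrank_euclideanSpace_fin] using
    stmt_10_general volume hDopen hDc hΦbij.mapsTo hΦmono.monotoneOn (by positivity)
      ⟨c₁, hc₁, fun r R hr hrR => (hΦscale r R hr hrR).1⟩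
      ⟨c₂, hc₂, fun r R hr hrR => (hΦscale r R hr hrR).2⟩
      (fun r hr => hψpos r hr) hψmono hγ₁
      ⟨b₁, hb₁, fun r R hr hrR => (hψscale r R hr hrR).1⟩ hγ₂
      ⟨b₂, hb₂, fun r R hr hrR => (hψscale r R hr hrR).2⟩
end
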